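/- (Second-order topic moment, Lemma on exact moments of the LDA model, M2 part.) Let k, d ≥ 1, α ∈ ℝ^k with α_i > 0, α_0 := Σ_i α_i, and μ ∈ ℝ^{d×k} with columns μ_1, …, μ_k. Then for all coordinates a, b ∈ {1,…,d}: (α_0+1)·E_α[(μx̄)_a (μx̄)_b] − α_0·E_α[(μx̄)_a]·E_α[(μx̄)_b] = Σ_{i=1}^k (α_i/α_0) μ_{a,i} μ_{b,i}. Equivalently, the centered second moment (α_0+1)E[(μh)(μh)ᵀ] − α_0 E[μh]E[μh]ᵀ under h ∼ Dirichlet(α) equals Σ_{i=1}^k (α_i/α_0) μ_i μ_iᵀ. -/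

import Mathlib

/-!
Everything follows from Dirichlet's integral
`∫ ∏ x̄_i^(α_i - 1) = ∏ Γ(α_i) / Γ(∑ α_i)` (`integral_dirW`). It is proved by induction on the
dimension, in the more general form `lintegral_scaledWeight` for simplices of arbitrary size
`t > 0`: fixing the first coordinate `s` leaves a simplex of size `t - s`, on which the inductive
hypothesis gives a power of `t - s`, so that a rescaled Euler beta integral in `s` remains. The
induction is done with lower Lebesgue integrals, so integrability is a consequence.

Multiplying the weight by `x̄_j` replaces `α` by `α + e_j` (`bar_mul_dirW`), which by
`Γ(s + 1) = s Γ(s)` multiplies the integral by `α_j / α_0` (`integral_dirW_shift`). Hence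
`E[x̄_i] = α_i / α_0` and `E[x̄_i x̄_j] = α_i (α_j + δ_ij) / (α_0 (α_0 + 1))`. In the claimed
combination the products `α_i α_j` cancel and only the diagonal terms `δ_ij α_i / α_0` survive.
-/

open MeasureTheory

noncomputable section

/-- The simplex `T_k ⊆ ℝ^{k-1}`: nonnegative coordinates summing to at most 1. -/
def Tset (k : ℕ) : Set (Fin (k - 1) → ℝ) :=
  {x | (∀ i, 0 ≤ x i) ∧ ∑ i, x i ≤ 1}

/-- The completed vector `x̄ ∈ ℝ^k`: first `k-1` coordinates are those of `x`,
the last coordinate is `1 - Σ x_i`. -/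
def bar (k : ℕ) (x : Fin (k - 1) → ℝ) : Fin k → ℝ :=
  fun i => if h : (i : ℕ) < k - 1 then x ⟨i, h⟩ else 1 - ∑ j, x j

/-- The Dirichlet weight `w_α(x) = ∏ x̄_i^{α_i - 1}`. -/
def dirW (k : ℕ) (α : Fin k → ℝ) (x : Fin (k - 1) → ℝ) : ℝ :=
  ∏ i, bar k x i ^ (α i - 1)

/-- Expectation of `g(x̄)` under the Dirichlet(α) distribution. -/
def Ealpha (k : ℕ) (α : Fin k → ℝ) (g : (Fin k → ℝ) → ℝ) : ℝ :=
  (∫ x in Tset k, g (bar k x) * dirW k α x) / ∫ x in Tset k, dirW k α x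

/-! ### Dirichlet's integral on simplices of arbitrary size -/

open ProbabilityTheory in
/-- Euler's beta integral rescaled to the interval `[0, t]`. -/
lemma lintegral_beta_scaled {u v t : ℝ} (hu : 0 < u) (hv : 0 < v) (ht : 0 < t) :
    ∫⁻ s : ℝ, (Set.Icc 0 t).indicator
      (fun s => ENNReal.ofReal (s ^ (u - 1) * (t - s) ^ (v - 1))) s =
      ENNReal.ofReal (t ^ (u + v - 1) * beta u v) := by
  have hB := beta_pos hu hv
  have key : ∀ᵐ s : ℝ, (Set.Icc 0 t).indicator
      (fun s => ENNReal.ofReal (s ^ (u - 1) * (t - s) ^ (v - 1))) s =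
      ENNReal.ofReal (t ^ (u + v - 2) * beta u v) * betaPDF u v (t⁻¹ * s) := by
    have h0 : ∀ᵐ s : ℝ, s ≠ 0 := by simp [ae_iff]
    have h1 : ∀ᵐ s : ℝ, s ≠ t := by simp [ae_iff]
    filter_upwards [h0, h1] with s hs0 hst
    by_cases hs : s ∈ Set.Icc 0 t
    · have hs0' : 0 < s := lt_of_le_of_ne hs.1 (Ne.symm hs0)
      have hst' : s < t := lt_of_le_of_ne hs.2 hst
      have e1 : t⁻¹ * s = s / t := by field_simp
      have e2 : 1 - s / t = (t - s) / t := by field_simp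
      rw [Set.indicator_of_mem hs, e1, betaPDF_of_pos_lt_one (by positivity)
        ((div_lt_one ht).2 hst'), ← ENNReal.ofReal_mul (by positivity), e2,
        Real.div_rpow hs0'.le ht.le, Real.div_rpow (by linarith) ht.le]
      congr 1
      have e3 : t ^ (u + v - 2) = t ^ (u - 1) * t ^ (v - 1) := by
        rw [← Real.rpow_add ht]; congr 1; ring
      have : 0 < t ^ (u - 1) := by positivity
      have : 0 < t ^ (v - 1) := by positivity
      rw [e3]
      field_simp
    · rw [Set.indicator_of_notMem hs]
      rw [Set.mem_Icc, not_and_or, not_le, not_le] at hs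
      rcases hs with hs | hs
      · rw [betaPDF_eq_zero_of_nonpos, mul_zero]
        exact mul_nonpos_of_nonneg_of_nonpos (by positivity) hs.le
      · rw [betaPDF_eq_zero_of_one_le, mul_zero]
        rw [inv_mul_eq_div]
        exact (one_le_div ht).2 hs.le
  have hm : Measurable (betaPDF u v) := (measurable_betaPDFReal u v).ennreal_ofReal
  have hc : ∫⁻ s : ℝ, betaPDF u v (t⁻¹ * s) = ENNReal.ofReal t := by
    rw [← lintegral_map (μ := volume) (g := fun s => t⁻¹ * s) hm (by fun_prop),
      Real.map_volume_mul_left (inv_ne_zero ht.ne'), lintegral_smul_measure,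
      lintegral_betaPDF_eq_one hu hv]
    simp [abs_of_pos ht]
  rw [lintegral_congr_ae key, lintegral_const_mul _ (by fun_prop), hc,
    ← ENNReal.ofReal_mul (by positivity)]
  congr 1
  have e3 : t ^ (u + v - 1) = t ^ (u + v - 2) * t := by
    rw [← Real.rpow_add_one ht.ne']; congr 1; ring
  rw [e3]
  ring

/-- The Dirichlet weight on the simplex `{x ≥ 0, ∑ x ≤ t}` of size `t`, extended by zero; `γ` is
the exponent parameter of the eliminated coordinate `t - ∑ x`. -/
def scaledWeight {n : ℕ} (β : Fin n → ℝ) (γ t : ℝ) (x : Fin n → ℝ) : ENNReal :=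
  {x : Fin n → ℝ | (∀ i, 0 ≤ x i) ∧ ∑ i, x i ≤ t}.indicator
    (fun x => ENNReal.ofReal ((∏ i, x i ^ (β i - 1)) * (t - ∑ i, x i) ^ (γ - 1))) x

lemma measurableSet_scaledSimplex (n : ℕ) (t : ℝ) :
    MeasurableSet {x : Fin n → ℝ | (∀ i, 0 ≤ x i) ∧ ∑ i, x i ≤ t} := by
  measurability

lemma measurable_scaledWeight {n : ℕ} (β : Fin n → ℝ) (γ t : ℝ) :
    Measurable (scaledWeight β γ t) := by
  refine Measurable.indicator ?_ (measurableSet_scaledSimplex n t)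
  fun_prop

/-- Fixing the first coordinate `s` leaves a weight of the same kind on the simplex of size
`t - s`. -/
lemma scaledWeight_cons {n : ℕ} (β : Fin (n + 1) → ℝ) (γ t s : ℝ) (hs : 0 ≤ s)
    (y : Fin n → ℝ) :
    scaledWeight β γ t (Fin.cons s y) =
      ENNReal.ofReal (s ^ (β 0 - 1)) * scaledWeight (fun i => β i.succ) γ (t - s) y := by
  unfold scaledWeight
  by_cases h : (∀ i, 0 ≤ y i) ∧ ∑ i, y i ≤ t - s
  · rw [Set.indicator_of_mem, Set.indicator_of_mem, ← ENNReal.ofReal_mul (by positivity)]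
    · simp only [Fin.prod_univ_succ, Fin.sum_univ_succ, Fin.cons_zero, Fin.cons_succ]
      congr 1
      rw [sub_sub, mul_assoc]
    · exact h
    · simp only [Set.mem_ofPred_eq, Fin.forall_fin_succ, Fin.sum_univ_succ, Fin.cons_zero,
        Fin.cons_succ]
      exact ⟨⟨hs, h.1⟩, by linarith [h.2]⟩
  · rw [Set.indicator_of_notMem, Set.indicator_of_notMem, mul_zero]
    · exact h
    · simp only [Set.mem_ofPred_eq, Fin.forall_fin_succ, Fin.sum_univ_succ, Fin.cons_zero,
        Fin.cons_succ]
      rintro ⟨⟨-, h1⟩, h2⟩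
      exact h ⟨h1, by linarith⟩

lemma scaledWeight_cons_of_neg {n : ℕ} (β : Fin (n + 1) → ℝ) (γ t s : ℝ) (hs : s < 0)
    (y : Fin n → ℝ) : scaledWeight β γ t (Fin.cons s y) = 0 := by
  refine Set.indicator_of_notMem ?_ _
  rintro ⟨h, -⟩
  have := h 0
  rw [Fin.cons_zero] at this
  linarith

lemma scaledWeight_of_neg {n : ℕ} (β : Fin n → ℝ) (γ t : ℝ) (ht : t < 0)
    (y : Fin n → ℝ) : scaledWeight β γ t y = 0 := by
  refine Set.indicator_of_notMem ?_ _
  rintro ⟨h, h'⟩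
  have := Finset.sum_nonneg (fun i (_ : i ∈ Finset.univ) => h i)
  linarith

/-- Dirichlet's integral on the simplex of size `t`. -/
lemma lintegral_scaledWeight {n : ℕ} (β : Fin n → ℝ) (γ t : ℝ) (hβ : ∀ i, 0 < β i)
    (hγ : 0 < γ) (ht : 0 < t) :
    ∫⁻ x, scaledWeight β γ t x =
      ENNReal.ofReal (t ^ (∑ i, β i + γ - 1) *
        ((∏ i, Real.Gamma (β i)) * Real.Gamma γ / Real.Gamma (∑ i, β i + γ))) := by
  induction n generalizing t with
  | zero =>
    have hG := Real.Gamma_pos_of_pos hγ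
    rw [lintegral_unique]
    simp [scaledWeight, ht.le, hG.ne', Set.indicator, volume_pi]
  | succ n ih =>
    have hS : 0 < ∑ i : Fin n, β i.succ + γ :=
      add_pos_of_nonneg_of_pos (Finset.sum_nonneg fun i _ => (hβ _).le) hγ
    set S := ∑ i : Fin n, β i.succ + γ with hSdef
    set C := (∏ i : Fin n, Real.Gamma (β i.succ)) * Real.Gamma γ / Real.Gamma S with hC
    have hCpos : 0 < C := by
      have := Finset.prod_pos fun (i : Fin n) (_ : i ∈ Finset.univ) =>
        Real.Gamma_pos_of_pos (hβ i.succ)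
      have := Real.Gamma_pos_of_pos hγ
      have := Real.Gamma_pos_of_pos hS
      positivity
    have hmp := (volume_preserving_piFinSuccAbove (fun _ : Fin (n + 1) => ℝ) 0).symm
    have hm := measurable_scaledWeight β γ t
    rw [← hmp.lintegral_comp hm, Measure.volume_eq_prod,
      lintegral_prod (fun a => scaledWeight β γ t
        ((MeasurableEquiv.piFinSuccAbove (fun _ : Fin (n + 1) => ℝ) 0).symm a))
        (hm.comp hmp.measurable).aemeasurable]
    have hcons : ∀ (s : ℝ) (y : Fin n → ℝ),
        (MeasurableEquiv.piFinSuccAbove (fun _ : Fin (n + 1) => ℝ) 0).symm (s, y) =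
          (Fin.cons s y : Fin (n + 1) → ℝ) := fun s y => by
      simp [MeasurableEquiv.piFinSuccAbove, Fin.consEquiv]
    have key : ∀ᵐ s : ℝ, ∫⁻ y : Fin n → ℝ, scaledWeight β γ t
        ((MeasurableEquiv.piFinSuccAbove (fun _ : Fin (n + 1) => ℝ) 0).symm (s, y)) =
        ENNReal.ofReal C * (Set.Icc 0 t).indicator
          (fun s => ENNReal.ofReal (s ^ (β 0 - 1) * (t - s) ^ (S - 1))) s := by
      -- At `s = t` the remaining simplex degenerates, so that null set is discarded.
      have h1 : ∀ᵐ s : ℝ, s ≠ t := by simp [ae_iff]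
      filter_upwards [h1] with s hst
      simp only [hcons]
      rcases lt_or_ge s 0 with hs | hs
      · simp [scaledWeight_cons_of_neg β γ t s hs, hs]
      · simp only [scaledWeight_cons β γ t s hs]
        rw [lintegral_const_mul _ (measurable_scaledWeight _ _ _)]
        rcases lt_or_gt_of_ne hst with h | h
        · rw [ih _ _ (fun i => hβ i.succ) (by linarith),
            Set.indicator_of_mem (Set.mem_Icc.2 ⟨hs, h.le⟩),
            ← ENNReal.ofReal_mul (by positivity), ← ENNReal.ofReal_mul hCpos.le]
          congr 1
          rw [hC, hSdef]
          ring
        · simp [scaledWeight_of_neg _ γ (t - s) (by linarith), h]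
    rw [lintegral_congr_ae key, lintegral_const_mul' _ _ ENNReal.ofReal_ne_top,
      lintegral_beta_scaled (hβ 0) hS ht, ← ENNReal.ofReal_mul hCpos.le]
    congr 1
    have e : ∑ i, β i + γ = β 0 + S := by rw [Fin.sum_univ_succ, hSdef]; ring
    have := Real.Gamma_pos_of_pos hS
    rw [e, Fin.prod_univ_succ, hC, ProbabilityTheory.beta]
    field_simp

/-! ### The normalizing constant of the Dirichlet distribution -/

lemma bar_castSucc {n : ℕ} (x : Fin n → ℝ) (i : Fin n) : bar (n + 1) x i.castSucc = x i := by
  simp [bar]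

lemma bar_last {n : ℕ} (x : Fin n → ℝ) : bar (n + 1) x (Fin.last n) = 1 - ∑ i, x i := by
  simp [bar]

lemma bar_nonneg {n : ℕ} {x : Fin n → ℝ} (hx : x ∈ Tset (n + 1)) (i : Fin (n + 1)) :
    0 ≤ bar (n + 1) x i := by
  induction i using Fin.lastCases with
  | last => rw [bar_last]; exact sub_nonneg.2 hx.2
  | cast i => rw [bar_castSucc]; exact hx.1 i

lemma measurableSet_Tset (n : ℕ) : MeasurableSet (Tset (n + 1)) :=
  measurableSet_scaledSimplex n 1

lemma dirW_succ {n : ℕ} (α : Fin (n + 1) → ℝ) (x : Fin n → ℝ) :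
    dirW (n + 1) α x =
      (∏ i : Fin n, x i ^ (α i.castSucc - 1)) * (1 - ∑ i, x i) ^ (α (Fin.last n) - 1) := by
  unfold dirW
  rw [Fin.prod_univ_castSucc, bar_last]
  simp only [bar_castSucc]

lemma dirW_nonneg {n : ℕ} (α : Fin (n + 1) → ℝ) {x : Fin n → ℝ} (hx : x ∈ Tset (n + 1)) :
    0 ≤ dirW (n + 1) α x :=
  Finset.prod_nonneg fun i _ => Real.rpow_nonneg (bar_nonneg hx i) _

lemma measurable_dirW {n : ℕ} (α : Fin (n + 1) → ℝ) :
    Measurable (fun x : Fin n → ℝ => dirW (n + 1) α x) := by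
  simp only [dirW_succ]
  fun_prop

lemma setLIntegral_dirW {n : ℕ} (α : Fin (n + 1) → ℝ) (hα : ∀ i, 0 < α i) :
    ∫⁻ x in Tset (n + 1), ENNReal.ofReal (dirW (n + 1) α x) =
      ENNReal.ofReal ((∏ i, Real.Gamma (α i)) / Real.Gamma (∑ i, α i)) := by
  have h := lintegral_scaledWeight (fun i : Fin n => α i.castSucc) (α (Fin.last n)) 1
    (fun i => hα _) (hα _) one_pos
  rw [Real.one_rpow, one_mul, ← Fin.prod_univ_castSucc (fun i => Real.Gamma (α i)),
    ← Fin.sum_univ_castSucc] at h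
  rw [← h, ← lintegral_indicator (measurableSet_Tset n)]
  simp only [dirW_succ]
  rfl

lemma integrableOn_dirW {n : ℕ} (α : Fin (n + 1) → ℝ) (hα : ∀ i, 0 < α i) :
    IntegrableOn (fun x => dirW (n + 1) α x) (Tset (n + 1)) := by
  refine (lintegral_ofReal_ne_top_iff_integrable
    (measurable_dirW α).aestronglyMeasurable
    (ae_restrict_of_forall_mem (measurableSet_Tset n) fun x hx => dirW_nonneg α hx)).1
    ((setLIntegral_dirW α hα).trans_ne ENNReal.ofReal_ne_top)

/-- Dirichlet's integral: the normalizing constant of the Dirichlet distribution. -/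
lemma integral_dirW {n : ℕ} (α : Fin (n + 1) → ℝ) (hα : ∀ i, 0 < α i) :
    ∫ x in Tset (n + 1), dirW (n + 1) α x =
      (∏ i, Real.Gamma (α i)) / Real.Gamma (∑ i, α i) := by
  rw [integral_eq_lintegral_of_nonneg_ae
    (ae_restrict_of_forall_mem (measurableSet_Tset n) fun x hx => dirW_nonneg α hx)
    (measurable_dirW α).aestronglyMeasurable, setLIntegral_dirW α hα, ENNReal.toReal_ofReal]
  have := Finset.prod_pos fun i (_ : i ∈ Finset.univ) => Real.Gamma_pos_of_pos (hα i)
  have := Real.Gamma_pos_of_pos (Finset.sum_pos (fun i _ => hα i) Finset.univ_nonempty)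
  positivity

lemma integral_dirW_pos {n : ℕ} (α : Fin (n + 1) → ℝ) (hα : ∀ i, 0 < α i) :
    0 < ∫ x in Tset (n + 1), dirW (n + 1) α x := by
  rw [integral_dirW α hα]
  exact div_pos (Finset.prod_pos fun i _ => Real.Gamma_pos_of_pos (hα i))
    (Real.Gamma_pos_of_pos (Finset.sum_pos (fun i _ => hα i) Finset.univ_nonempty))

/-! ### Moments of order one and two -/

/-- The parameter vector `α + e_j`. -/
def shift {n : ℕ} (α : Fin n → ℝ) (j i : Fin n) : ℝ :=
  α i + if i = j then 1 else 0

lemma shift_self {n : ℕ} (α : Fin n → ℝ) (j : Fin n) : shift α j j = α j + 1 := by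
  simp [shift]

lemma shift_of_ne {n : ℕ} (α : Fin n → ℝ) {j i : Fin n} (h : i ≠ j) : shift α j i = α i := by
  simp [shift, h]

lemma sum_shift {n : ℕ} (α : Fin n → ℝ) (j : Fin n) : ∑ i, shift α j i = ∑ i, α i + 1 := by
  simp [shift, Finset.sum_add_distrib]

lemma shift_pos {n : ℕ} {α : Fin n → ℝ} (hα : ∀ i, 0 < α i) (j i : Fin n) :
    0 < shift α j i :=
  add_pos_of_pos_of_nonneg (hα i) (by split_ifs <;> norm_num)

/-- Multiplying the weight by a coordinate raises the corresponding parameter by one. This holds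
on the boundary too, where for `x̄_j = 0` both sides vanish because `α_j ≠ 0`. -/
lemma bar_mul_dirW {n : ℕ} (α : Fin (n + 1) → ℝ) (hα : ∀ i, 0 < α i) (j : Fin (n + 1))
    {x : Fin n → ℝ} (hx : x ∈ Tset (n + 1)) :
    bar (n + 1) x j * dirW (n + 1) α x = dirW (n + 1) (shift α j) x := by
  unfold dirW
  rw [← Finset.mul_prod_erase _ _ (Finset.mem_univ j),
    ← Finset.mul_prod_erase _ (fun i => bar (n + 1) x i ^ (shift α j i - 1))
      (Finset.mem_univ j), ← mul_assoc]
  congr 1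
  · have h := Real.rpow_add_one' (bar_nonneg hx j) (y := α j - 1) (by simpa using (hα j).ne')
    rw [shift_self, add_sub_right_comm, h, mul_comm]
  · refine Finset.prod_congr rfl fun i hi => ?_
    rw [shift_of_ne α (Finset.ne_of_mem_erase hi)]

/-- The recurrence `Γ(s + 1) = s Γ(s)` applied to Dirichlet's integral. -/
lemma integral_dirW_shift {n : ℕ} (α : Fin (n + 1) → ℝ) (hα : ∀ i, 0 < α i) (j : Fin (n + 1)) :
    ∫ x in Tset (n + 1), dirW (n + 1) (shift α j) x =
      α j / (∑ i, α i) * ∫ x in Tset (n + 1), dirW (n + 1) α x := by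
  have hS : 0 < ∑ i, α i := Finset.sum_pos (fun i _ => hα i) Finset.univ_nonempty
  have hG := Real.Gamma_pos_of_pos hS
  rw [integral_dirW _ (shift_pos hα j), integral_dirW α hα]
  have e2 : ∏ i, Real.Gamma (shift α j i) = α j * ∏ i, Real.Gamma (α i) := by
    rw [← Finset.mul_prod_erase _ _ (Finset.mem_univ j),
      ← Finset.mul_prod_erase _ (fun i => Real.Gamma (α i)) (Finset.mem_univ j), ← mul_assoc,
      shift_self, Real.Gamma_add_one (hα j).ne']
    congr 1
    refine Finset.prod_congr rfl fun i hi => ?_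
    rw [shift_of_ne α (Finset.ne_of_mem_erase hi)]
  rw [sum_shift, e2, Real.Gamma_add_one hS.ne']
  field_simp

lemma Ealpha_linear {n : ℕ} (α : Fin (n + 1) → ℝ) (hα : ∀ i, 0 < α i) (c : Fin (n + 1) → ℝ) :
    Ealpha (n + 1) α (fun h => ∑ i, c i * h i) = ∑ i, c i * (α i / ∑ j, α j) := by
  have hZ := integral_dirW_pos α hα
  have e : ∫ x in Tset (n + 1), (∑ i, c i * bar (n + 1) x i) * dirW (n + 1) α x =
      ∫ x in Tset (n + 1), ∑ i, c i * dirW (n + 1) (shift α i) x := by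
    refine setIntegral_congr_fun (measurableSet_Tset n) fun x hx => ?_
    simp only [Finset.sum_mul, mul_assoc, bar_mul_dirW α hα _ hx]
  unfold Ealpha
  rw [e, integral_finsetSum _ fun i _ => (integrableOn_dirW _ (shift_pos hα i)).const_mul _,
    div_eq_iff hZ.ne', Finset.sum_mul]
  refine Finset.sum_congr rfl fun i _ => ?_
  rw [integral_const_mul, integral_dirW_shift α hα]
  ring

lemma Ealpha_bilinear {n : ℕ} (α : Fin (n + 1) → ℝ) (hα : ∀ i, 0 < α i)
    (c e : Fin (n + 1) → ℝ) :
    Ealpha (n + 1) α (fun h => (∑ i, c i * h i) * ∑ i, e i * h i) =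
      ∑ i, ∑ j, c i * e j *
        (shift α i j / (∑ l, α l + 1) * (α i / ∑ l, α l)) := by
  have hZ := integral_dirW_pos α hα
  have h : ∫ x in Tset (n + 1), ((∑ i, c i * bar (n + 1) x i) * ∑ i, e i * bar (n + 1) x i) *
        dirW (n + 1) α x =
      ∫ x in Tset (n + 1), ∑ i, ∑ j,
        c i * e j * dirW (n + 1) (shift (shift α i) j) x := by
    refine setIntegral_congr_fun (measurableSet_Tset n) fun x hx => ?_
    rw [Finset.sum_mul_sum, Finset.sum_mul]
    simp_rw [Finset.sum_mul]
    refine Finset.sum_congr rfl fun i _ => Finset.sum_congr rfl fun j _ => ?_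
    rw [← bar_mul_dirW _ (shift_pos hα i) j hx, ← bar_mul_dirW α hα i hx]
    ring
  have hint : ∀ i j, IntegrableOn
      (fun x => c i * e j * dirW (n + 1) (shift (shift α i) j) x)
      (Tset (n + 1)) := fun i j =>
    (integrableOn_dirW _ (shift_pos (shift_pos hα i) j)).const_mul _
  unfold Ealpha
  rw [h, integral_finsetSum _ fun i _ => integrable_finsetSum _ fun j _ => hint i j,
    div_eq_iff hZ.ne', Finset.sum_mul]
  refine Finset.sum_congr rfl fun i _ => ?_
  rw [integral_finsetSum _ fun j _ => hint i j, Finset.sum_mul]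
  refine Finset.sum_congr rfl fun j _ => ?_
  rw [integral_const_mul, integral_dirW_shift _ (shift_pos hα i), integral_dirW_shift α hα, sum_shift]
  ring

/-- Second-order LDA topic moment: the centered second moment
`(α_0+1)E[(μh)_a(μh)_b] − α_0 E[(μh)_a]E[(μh)_b]` equals
`Σ_i (α_i/α_0) μ_{a,i} μ_{b,i}` for `h ∼ Dirichlet(α)`. -/
theorem lda_second_moment (k d : ℕ) (hk : 1 ≤ k) (hd : 1 ≤ d)
    (α : Fin k → ℝ) (hα : ∀ i, 0 < α i)
    (μ : Matrix (Fin d) (Fin k) ℝ) (a b : Fin d) :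
    ((∑ i, α i) + 1) *
        Ealpha k α (fun h => (∑ i, μ a i * h i) * (∑ i, μ b i * h i)) -
      (∑ i, α i) * Ealpha k α (fun h => ∑ i, μ a i * h i) *
        Ealpha k α (fun h => ∑ i, μ b i * h i) =
      ∑ i, (α i / ∑ j, α j) * μ a i * μ b i := by
  obtain ⟨n, rfl⟩ : ∃ n, k = n + 1 := ⟨k - 1, by omega⟩
  have hS : 0 < ∑ i, α i := Finset.sum_pos (fun i _ => hα i) Finset.univ_nonempty
  rw [Ealpha_bilinear α hα, Ealpha_linear α hα, Ealpha_linear α hα, Finset.mul_sum, mul_assoc,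
    Finset.sum_mul_sum, Finset.mul_sum, ← Finset.sum_sub_distrib]
  refine Finset.sum_congr rfl fun i _ => ?_
  rw [Finset.mul_sum, Finset.mul_sum, ← Finset.sum_sub_distrib, Finset.sum_eq_single i]
  · rw [shift_self]
    field_simp
    ring
  · intro j _ hj
    rw [shift_of_ne α hj]
    field_simp
    ring
  · simp
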